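/- Let J be an antichain on V consisting of sets of size at least 2 with ⋃J = V, and let I = {v : ∃u∈J, v ⊆ u} be the simplicial complex generated by J. Let S be a regular I-system of difference fields on V over A. Then [S(V) : S₀(V)] = ∏_{u∈J} [S(u) : S(u)^-], where S₀(V) = ∏_{v∈I\J} S(v) and S(u)^- = ∏_{v∈P(u)^-} S(v). (The degree computation in the proof of the Stochastic Independence Theorem.) -/

import Mathlib

/-- Subfields `E` and `F` of `K` containing `C` are linearly disjoint over `C`
if the multiplication map `E ⊗[C] F → K` is injective. -/
def LinearDisjointOver {K : Type*} [Field K] (C E F : Subfield K) : Prop :=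
  (Submodule.span C (E : Set K)).LinearDisjoint (Submodule.span C (F : Set K))

/-- The relative algebraic closure `E^{alg}` of a subfield `E` inside `K`. -/
def algCl {K : Type*} [Field K] (E : Subfield K) : Subfield K :=
  Subfield.closure {x : K | IsAlgebraic E x}

/-- The inversive closure `E^{inv}`: the smallest subfield of `K` containing `E`
closed under `σ` and `σ⁻¹`. -/
def invCl {K : Type*} [Field K] (σ : K ≃+* K) (E : Subfield K) : Subfield K :=
  sInf {F : Subfield K | E ≤ F ∧ (∀ x ∈ F, σ x ∈ F) ∧ ∀ x ∈ F, σ.symm x ∈ F}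

/-- `E` and `F` are independent over `C`: `((E·C)^{inv})^{alg}` and
`((F·C)^{inv})^{alg}` are linearly disjoint over `(C^{inv})^{alg}`. -/
def IndependentOver {K : Type*} [Field K] (σ : K ≃+* K) (C E F : Subfield K) : Prop :=
  LinearDisjointOver (algCl (invCl σ C)) (algCl (invCl σ (E ⊔ C))) (algCl (invCl σ (F ⊔ C)))

/-- `F ≤ E` and `E/F` is a finite Galois extension (of subfields of `K`). -/
def IsFiniteGaloisExt {K : Type*} [Field K] (F E : Subfield K) : Prop :=
  ∃ h : F ≤ E,
    letI : Algebra F E := (Subfield.inclusion h).toAlgebra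
    FiniteDimensional F E ∧ IsGalois F E

/-- `I_u = {v ∩ u : v ∈ I}`. -/
def interFamily {V : Type*} [DecidableEq V] (I : Set (Finset V)) (u : Finset V) :
    Set (Finset V) :=
  {w | ∃ v ∈ I, w = v ∩ u}

/-- A system of difference fields on `V` over `A` inside `(K, σ)`. -/
structure DiffFieldSystem {K : Type*} [Field K] (σ : K ≃+* K)
    (V : Type*) [Fintype V] [DecidableEq V] (A : Subfield K) where
  /-- the underlying map from subsets of `V` to subfields of `K` -/
  S : Finset V → Subfield K
  mono : ∀ {u v : Finset V}, u ⊆ v → S u ≤ S v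
  empty_eq : S ∅ = A
  sigma_stable : ∀ u : Finset V, ∀ x ∈ S u, σ x ∈ S u
  perfect : ∀ u : Finset V, PerfectField (S u)
  /-- each `S u` has finite transcendence degree over `A` -/
  fin_trdeg : ∀ u : Finset V, ∃ t : Finset K,
    ∀ x ∈ S u, IsAlgebraic ↥(A ⊔ Subfield.closure (t : Set K)) x
  /-- each `S u` is the perfect closure of a difference subfield generated over
  `A` by a finite set (i.e. the smallest perfect `σ`-stable subfield of `K`
  containing `A` and that finite set) -/
  fin_gen : ∀ u : Finset V, ∃ t : Finset K,
    (A ≤ S u ∧ (t : Set K) ⊆ S u) ∧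
    ∀ F : Subfield K, A ≤ F → (t : Set K) ⊆ F → (∀ x ∈ F, σ x ∈ F) →
      PerfectField F → S u ≤ F
  /-- the family `(S {i})_{i ∈ V}` is independent over `A` -/
  indep : ∀ I₁ I₂ : Finset V, Disjoint I₁ I₂ →
    IndependentOver σ A (A ⊔ ⨆ i ∈ I₁, S {i}) (A ⊔ ⨆ i ∈ I₂, S {i})
  /-- for `|u| ≥ 2`, `S u` is a finite Galois extension of
  `S(u)⁻ = ∏_{v ∈ P(u)⁻} S v` -/
  galois : ∀ u : Finset V, 2 ≤ u.card →
    IsFiniteGaloisExt (⨆ v ∈ u.powerset.erase u, S v) (S u)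

namespace DiffFieldSystem

variable {K : Type*} [Field K] {σ : K ≃+* K}
variable {V : Type*} [Fintype V] [DecidableEq V] {A : Subfield K}

/-- `S(u)⁻ = ∏_{v ∈ P(u)⁻} S(v)`. -/
def Sminus (𝒮 : DiffFieldSystem σ V A) (u : Finset V) : Subfield K :=
  ⨆ v ∈ u.powerset.erase u, 𝒮.S v

/-- `𝒮` is an `I`-system: `S u = S(u)⁻` for `u ∉ I`. -/
def IsOn (𝒮 : DiffFieldSystem σ V A) (I : Set (Finset V)) : Prop :=
  ∀ u : Finset V, u ∉ I → 𝒮.S u = 𝒮.Sminus u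

/-- `𝒮` is regular: for every nonempty `u`, `S u` is linearly disjoint from
`∏_{v ∈ P(u)⁻} S(v)^{alg}` over `∏_{v ∈ P(u)⁻} S(v)`. -/
def Regular (𝒮 : DiffFieldSystem σ V A) : Prop :=
  ∀ u : Finset V, u ≠ ∅ →
    LinearDisjointOver (𝒮.Sminus u) (𝒮.S u) (⨆ v ∈ u.powerset.erase u, algCl (𝒮.S v))

end DiffFieldSystem

/-- `I` is a simplicial complex on `V`: downward closed with union all of `V`. -/
def IsSimplicialComplexOn (V : Type*) [DecidableEq V] (I : Set (Finset V)) : Prop :=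
  (∀ u ∈ I, ∀ v : Finset V, v ⊆ u → v ∈ I) ∧ ∀ i : V, ∃ u ∈ I, i ∈ u

open scoped Classical in
/-- The degree `[E : F]` of an extension of subfields of a common field,
via the inclusion-induced algebra structure (0 if `F ≰ E`). -/
noncomputable def subfieldDeg {K : Type*} [Field K] (F E : Subfield K) : ℕ :=
  if h : F ≤ E then
    letI : Algebra F E := (Subfield.inclusion h).toAlgebra
    Module.finrank F E
  else 0


open IntermediateField Module in
theorem gal_deg_aux {F E : Type*} [Field F] [Field E] [Algebra F E] (A B : IntermediateField F E)
    [IsGalois F A] [FiniteDimensional F A] (h₁ : A ⊔ B = ⊤) (h₂ : A ⊓ B = ⊥) :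
    finrank B E = finrank F A := by
  have : IsGalois B E := IsGalois.sup_right A B h₁
  have : FiniteDimensional B E := by
    obtain ⟨T, hT₁, hT₂⟩ := IsGalois.is_separable_splitting_field F A
    let T' := T.map (algebraMap F B)
    have : T'.IsSplittingField B E := by
      rw [isSplittingField_iff_intermediateField] at hT₂ ⊢
      constructor
      · rw [Polynomial.map_map, ← IsScalarTower.algebraMap_eq]
        exact Polynomial.Splits.of_algHom hT₂.1 (IsScalarTower.toAlgHom _ _ _)
      · have h' : T'.rootSet E = T.rootSet E := by
          simp [Set.ext_iff, Polynomial.mem_rootSet', T']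
        rw [← lift_inj, lift_adjoin, ← coe_val, hT₂.1.image_rootSet] at hT₂
        rw [← restrictScalars_eq_top_iff (K := F), restrictScalars_adjoin, adjoin_union, adjoin_self,
          h', hT₂.2, lift_top, sup_comm, h₁]
    exact Polynomial.IsSplittingField.finiteDimensional _ T'
  rw [← IsGalois.card_aut_eq_finrank, ← IsGalois.card_aut_eq_finrank]
  exact Nat.card_congr <| Equiv.ofBijective (restrictRestrictAlgEquivMapHom _ _ _ _)
    ⟨restrictRestrictAlgEquivMapHom_injective _ _ h₁,
      restrictRestrictAlgEquivMapHom_surjective _ _ h₂⟩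

open IntermediateField Module in
theorem gal_deg {K : Type*} [Field K] {F A B : Subfield K} (hFA : IsFiniteGaloisExt F A)
    (hFB : F ≤ B) (hAB : A ⊓ B = F) :
    B.relfinrank (A ⊔ B) = F.relfinrank A := by
  obtain ⟨h, hfin, hgal⟩ := hFA
  let A1 : IntermediateField F K := Subfield.extendScalars h
  let B1 : IntermediateField F K := Subfield.extendScalars hFB
  have : FiniteDimensional F A1 := hfin
  have : IsGalois F A1 := hgal
  let C : IntermediateField F K := A1 ⊔ B1
  let A' : IntermediateField F C := A1.restrict le_sup_left
  let B' : IntermediateField F C := B1.restrict le_sup_right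
  have hA : IntermediateField.map C.val A' = A1 := lift_restrict le_sup_left
  have hB : IntermediateField.map C.val B' = B1 := lift_restrict le_sup_right
  have h₁ : A' ⊔ B' = ⊤ := by
    rw [← lift_inj, lift_top, lift_sup, lift_restrict le_sup_left, lift_restrict le_sup_right]
  have hinf : A1 ⊓ B1 = ⊥ := by
    rw [eq_bot_iff]
    intro x hx
    have hx' : x ∈ A ⊓ B := hx
    rw [hAB] at hx'
    exact IntermediateField.mem_bot.2 ⟨⟨x, hx'⟩, rfl⟩
  have h₂ : A' ⊓ B' = ⊥ := by
    rw [← lift_inj, lift_bot, lift_inf, lift_restrict le_sup_left, lift_restrict le_sup_right, hinf]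
  have : IsGalois F A' := IsGalois.of_algEquiv <| restrictAlgEquiv ..
  have : FiniteDimensional F A' :=
    LinearEquiv.finiteDimensional (restrictAlgEquiv (le_sup_left : A1 ≤ C)).toLinearEquiv
  have key : finrank B' C = finrank F A' := gal_deg_aux A' B' h₁ h₂
  have e1 : finrank F A' = F.relfinrank A := by
    rw [Subfield.relfinrank_eq_finrank_of_le h]
    exact (restrictAlgEquiv (le_sup_left : A1 ≤ C)).toLinearEquiv.finrank_eq.symm
  have e2 : finrank B' C = B.relfinrank (A ⊔ B) := by
    rw [← IntermediateField.relfinrank_top_right, ← IntermediateField.relfinrank_map_map _ _ C.val, hB]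
    have : (⊤ : IntermediateField F C).map C.val = A1 ⊔ B1 := lift_top _ _
    rw [this]
    change Subfield.relfinrank B1.toSubfield (A1 ⊔ B1).toSubfield = _
    rw [IntermediateField.sup_toSubfield]
    rfl
  rw [← e2, key, e1]

theorem subfieldDeg_eq {K : Type*} [Field K] {F E : Subfield K} (h : F ≤ E) :
    subfieldDeg F E = F.relfinrank E := by
  rw [subfieldDeg, dif_pos h, Subfield.relfinrank_eq_finrank_of_le h]
  rfl

theorem mem_algCl {K : Type*} [Field K] {E : Subfield K} {x : K} :
    x ∈ algCl E ↔ IsAlgebraic E x := by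
  constructor
  · intro hx
    have : algCl E ≤ (algebraicClosure E K).toSubfield :=
      Subfield.closure_le.2 fun y hy => mem_algebraicClosure_iff.2 hy
    exact mem_algebraicClosure_iff.1 (this hx)
  · intro hx
    exact Subfield.subset_closure hx

theorem algCl_eq {K : Type*} [Field K] (E : Subfield K) :
    algCl E = (algebraicClosure E K).toSubfield := by
  ext x
  rw [mem_algCl]
  exact mem_algebraicClosure_iff.symm

theorem le_algCl {K : Type*} [Field K] (E : Subfield K) : E ≤ algCl E := fun x hx =>
  mem_algCl.2 (isAlgebraic_algebraMap (⟨x, hx⟩ : E))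

theorem isAlgebraic_of_le {K : Type*} [Field K] {E F : Subfield K} (h : E ≤ F) {x : K}
    (hx : IsAlgebraic E x) : IsAlgebraic F x := by
  let : Algebra E F := (Subfield.inclusion h).toAlgebra
  have : IsScalarTower E F K := IsScalarTower.of_algebraMap_eq fun _ => rfl
  exact hx.tower_top F

theorem algCl_mono {K : Type*} [Field K] {E F : Subfield K} (h : E ≤ F) : algCl E ≤ algCl F :=
  fun _ hx => mem_algCl.2 (isAlgebraic_of_le h (mem_algCl.1 hx))

theorem algCl_idem {K : Type*} [Field K] (E : Subfield K) : algCl (algCl E) = algCl E := by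
  apply le_antisymm _ (le_algCl _)
  intro x hx
  rw [mem_algCl] at hx ⊢
  let : Algebra E (algCl E) := (Subfield.inclusion (le_algCl E)).toAlgebra
  have : IsScalarTower E (algCl E) K := IsScalarTower.of_algebraMap_eq fun _ => rfl
  have : Algebra.IsAlgebraic E (algCl E) := ⟨fun y => by
    have := mem_algCl.1 y.2
    exact (isAlgebraic_algebraMap_iff (A := K) (FaithfulSMul.algebraMap_injective _ _)).1 this⟩
  exact hx.restrictScalars E

theorem algCl_le_iff {K : Type*} [Field K] {E F : Subfield K} :
    algCl E ≤ algCl F ↔ E ≤ algCl F :=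
  ⟨fun h => (le_algCl E).trans h, fun h => (algCl_mono h).trans (algCl_idem F).le⟩

theorem isAlgClosed_algCl {K : Type*} [Field K] [IsAlgClosed K] (E : Subfield K) :
    IsAlgClosed (algCl E) := by
  rw [algCl_eq]
  exact (algebraicClosure.isAlgClosure (F := E) (E := K)).isAlgClosed

theorem linDisj_mono {K : Type*} [Field K] {C E F E' F' : Subfield K}
    (h : LinearDisjointOver C E F) (hE : E' ≤ E) (hF : F' ≤ F) : LinearDisjointOver C E' F' := by
  unfold LinearDisjointOver at *
  exact Submodule.LinearDisjoint.of_le_of_flat_left h (Submodule.span_mono hE)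
    (Submodule.span_mono hF)

theorem span_subfield {K : Type*} [Field K] {C E : Subfield K} (hE : C ≤ E) :
    Submodule.span C (E : Set K) =
      Subalgebra.toSubmodule (Subfield.extendScalars hE).toSubalgebra :=
  Submodule.span_eq (Subalgebra.toSubmodule (Subfield.extendScalars hE).toSubalgebra)

theorem linDisj_inf {K : Type*} [Field K] {C E F : Subfield K}
    (h : LinearDisjointOver C E F) (hE : C ≤ E) (hF : C ≤ F) : E ⊓ F ≤ C := by
  rw [LinearDisjointOver, span_subfield hE, span_subfield hF] at h
  have := Subalgebra.LinearDisjoint.inf_eq_bot (A := (Subfield.extendScalars hE).toSubalgebra)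
    (B := (Subfield.extendScalars hF).toSubalgebra) h
  intro x hx
  have hx' : x ∈ (Subfield.extendScalars hE).toSubalgebra ⊓
    (Subfield.extendScalars hF).toSubalgebra := hx
  rw [this] at hx'
  obtain ⟨y, rfl⟩ := Algebra.mem_bot.1 hx'
  exact y.2


open Filter in
/-- The ultrapower of a subfield `P` inside the ultrapower of `K`. -/
def germSub {K : Type*} [Field K] {X : Type*} (φ : Ultrafilter X) (P : Subfield K) :
    Subfield (Germ (φ : Filter X) K) where
  carrier := {x | x.LiftPred (· ∈ P)}
  mul_mem' {a b} := Germ.inductionOn₂ a b fun f g hf hg => by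
    change ∀ᶠ j in (φ : Filter X), _ ∈ P
    filter_upwards [hf, hg] with j h1 h2 using P.mul_mem h1 h2
  one_mem' := Eventually.of_forall fun _ => P.one_mem
  add_mem' {a b} := Germ.inductionOn₂ a b fun f g hf hg => by
    change ∀ᶠ j in (φ : Filter X), _ ∈ P
    filter_upwards [hf, hg] with j h1 h2 using P.add_mem h1 h2
  zero_mem' := Eventually.of_forall fun _ => P.zero_mem
  neg_mem' {a} := Germ.inductionOn a fun f hf => by
    change ∀ᶠ j in (φ : Filter X), _ ∈ P
    filter_upwards [hf] with j h1 using P.neg_mem h1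
  inv_mem' a := Germ.inductionOn a fun f hf => by
    change ∀ᶠ j in (φ : Filter X), _ ∈ P
    filter_upwards [hf] with j h1 using P.inv_mem h1

open Filter in
theorem coe_mem_germSub {K : Type*} [Field K] {X : Type*} {φ : Ultrafilter X} {P : Subfield K}
    {f : X → K} : (f : Germ (φ : Filter X) K) ∈ germSub φ P ↔ ∀ᶠ j in (φ : Filter X), f j ∈ P :=
  Iff.rfl

open Filter in
theorem germSub_mono {K : Type*} [Field K] {X : Type*} {φ : Ultrafilter X} {P Q : Subfield K}
    (h : P ≤ Q) : germSub φ P ≤ germSub φ Q := by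
  intro x
  refine Germ.inductionOn x fun f hf => ?_
  rw [coe_mem_germSub] at *
  exact hf.mono fun j hj => h hj

open Filter in
theorem germ_sum {K : Type*} [Field K] {X : Type*} (φ : Ultrafilter X) (n : Finset ℕ)
    (c : ℕ → X → K) (f : X → K) :
    ∑ i ∈ n, (c i : Germ (φ : Filter X) K) * (f : Germ (φ : Filter X) K) ^ i =
      ((fun j => ∑ i ∈ n, c i j * f j ^ i : X → K) : Germ (φ : Filter X) K) := by
  have : (fun j => ∑ i ∈ n, c i j * f j ^ i : X → K) = ∑ i ∈ n, c i * f ^ i := by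
    ext j; simp
  rw [this]
  change _ = Germ.coeRingHom (φ : Filter X) (∑ i ∈ n, c i * f ^ i)
  rw [map_sum]
  rfl

open Filter Polynomial in
theorem isAlgClosed_germ {K : Type*} [Field K] [IsAlgClosed K] {X : Type*} (φ : Ultrafilter X) :
    IsAlgClosed (Germ (φ : Filter X) K) := by
  apply IsAlgClosed.of_exists_root
  intro p hp hirr
  have hrep : ∀ x : Germ (φ : Filter X) K, ∃ f : X → K, (f : Germ (φ : Filter X) K) = x :=
    fun x => Germ.inductionOn x fun f => ⟨f, rfl⟩
  choose c hc using fun n => hrep (p.coeff n)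
  have hd : p.natDegree ≠ 0 := hirr.natDegree_pos.ne'
  have hroot : ∀ j, ∃ y : K, y ^ p.natDegree + ∑ i ∈ Finset.range p.natDegree, c i j * y ^ i = 0 := by
    intro j
    let q : K[X] := Polynomial.X ^ p.natDegree + ∑ i ∈ Finset.range p.natDegree, C (c i j) * Polynomial.X ^ i
    have hq : q.degree ≠ 0 := by
      have hlt : (∑ i ∈ Finset.range p.natDegree, C (c i j) * Polynomial.X ^ i).degree < (p.natDegree : WithBot ℕ) := by
        refine (Polynomial.degree_sum_le _ _).trans_lt ?_
        rw [Finset.sup_lt_iff (WithBot.bot_lt_coe _)]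
        intro i hi
        refine (degree_C_mul_X_pow_le _ _).trans_lt ?_
        exact_mod_cast Finset.mem_range.1 hi
      have : q.degree = p.natDegree := by
        rw [degree_add_eq_left_of_degree_lt]
        · simp
        · simpa using hlt
      rw [this]
      exact_mod_cast hd
    obtain ⟨y, hy⟩ := IsAlgClosed.exists_root q hq
    refine ⟨y, ?_⟩
    simpa [q, IsRoot, eval_finsetSum] using hy
  choose f hf using hroot
  refine ⟨(f : Germ (φ : Filter X) K), ?_⟩
  rw [eval_eq_sum_range, Finset.sum_range_succ]
  simp only [← hc]
  rw [germ_sum, hc, hp.coeff_natDegree, one_mul]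
  change ((_ : X → K) : Germ (φ : Filter X) K) = ((0 : X → K) : Germ (φ : Filter X) K)
  refine Germ.coe_eq.2 (Eventually.of_forall fun j => ?_)
  have := hf j
  rw [add_comm] at this
  exact this

open Filter Polynomial in
theorem algCl_germSub_le {K : Type*} [Field K] {X : Type*} (φ : Ultrafilter X) (P : Subfield K) :
    algCl (germSub φ P) ≤ germSub φ (algCl P) := by
  intro x
  refine Germ.inductionOn x fun f hf => ?_
  rw [mem_algCl] at hf
  obtain ⟨p, hp0, hp⟩ := hf
  have hrep : ∀ x : Germ (φ : Filter X) K, ∃ f : X → K, (f : Germ (φ : Filter X) K) = x :=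
    fun x => Germ.inductionOn x fun f => ⟨f, rfl⟩
  choose c hc using fun n => hrep (p.coeff n : Germ (φ : Filter X) K)
  have hcP : ∀ n, ∀ᶠ j in (φ : Filter X), c n j ∈ P := fun n => by
    rw [← coe_mem_germSub, hc]
    exact (p.coeff n).2
  have hlead : ∀ᶠ j in (φ : Filter X), c p.natDegree j ≠ 0 := by
    rw [Ultrafilter.eventually_not]
    intro h
    have h0 : (c p.natDegree : Germ (φ : Filter X) K) = ((0 : X → K) : Germ (φ : Filter X) K) :=
      Germ.coe_eq.2 h
    rw [hc] at h0
    have h1 : p.coeff p.natDegree = 0 := Subtype.ext h0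
    exact hp0 (leadingCoeff_eq_zero.1 h1)
  have hev : ∀ᶠ j in (φ : Filter X), ∑ i ∈ Finset.range (p.natDegree + 1), c i j * f j ^ i = 0 := by
    have h0 : ((fun j => ∑ i ∈ Finset.range (p.natDegree + 1), c i j * f j ^ i : X → K) :
        Germ (φ : Filter X) K) = ((0 : X → K) : Germ (φ : Filter X) K) := by
      rw [← germ_sum]
      rw [aeval_eq_sum_range] at hp
      refine Eq.trans (Finset.sum_congr rfl fun i _ => ?_) hp
      rw [hc]
      rfl
    exact Germ.coe_eq.1 h0
  have hall : ∀ᶠ j in (φ : Filter X), ∀ i ∈ Finset.range (p.natDegree + 1), c i j ∈ P :=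
    (Filter.eventually_all_finset _).2 fun i _ => hcP i
  rw [coe_mem_germSub]
  filter_upwards [hlead, hev, hall] with j h1 h2 h3
  rw [mem_algCl]
  classical
  let q : P[X] := ∑ i ∈ Finset.range (p.natDegree + 1),
    monomial i (if h : c i j ∈ P then (⟨c i j, h⟩ : P) else 0)
  refine ⟨q, ?_, ?_⟩
  · intro hq
    have := congrArg (fun r => ((r.coeff p.natDegree : P) : K)) hq
    simp only [q, finsetSum_coeff, coeff_monomial] at this
    rw [Finset.sum_ite_eq'] at this
    have hm : c p.natDegree j ∈ P := h3 _ (by simp)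
    simp [hm] at this
    exact h1 this
  · simp only [q, map_sum, aeval_monomial]
    rw [← h2]
    refine Finset.sum_congr rfl fun i hi => ?_
    rw [dif_pos (h3 i hi)]
    rfl

theorem exists_point {k A : Type*} [Field k] [IsAlgClosed k] [CommRing A] [Nontrivial A]
    [Algebra k A] [Algebra.FiniteType k A] : Nonempty (A →ₐ[k] k) := by
  obtain ⟨m, hm⟩ := Ideal.exists_maximal A
  let := Ideal.Quotient.field m
  have := finite_of_finite_type_of_isJacobsonRing k (A ⧸ m)
  have : Algebra.IsAlgebraic k (A ⧸ m) := Algebra.IsAlgebraic.of_finite k _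
  exact ⟨(IsAlgClosed.lift : (A ⧸ m) →ₐ[k] k).comp (Ideal.Quotient.mkₐ k m)⟩

open Filter in
theorem exists_spec {K : Type*} [Field K] {k M : Subfield K} (hkM : k ≤ M) [IsAlgClosed k] :
    ∃ (φ : Ultrafilter (Finset K)) (ψ : M →+* Germ (φ : Filter (Finset K)) K),
      (∀ (x : K) (hx : x ∈ k), ψ ⟨x, hkM hx⟩ = (Germ.const x : Germ (φ : Filter (Finset K)) K)) ∧
      ∀ x : M, ψ x ∈ germSub φ k := by
  classical
  let φ : Ultrafilter (Finset K) := Ultrafilter.of atTop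
  have hφ : ∀ p : Finset K → Prop, (∀ᶠ s in atTop, p s) → ∀ᶠ s in (φ : Filter (Finset K)), p s :=
    fun p hp => Ultrafilter.of_le atTop hp
  have hg : ∀ s : Finset K, Nonempty (Algebra.adjoin k (s : Set K) →ₐ[k] k) := fun s => by
    have : Algebra.FiniteType k (Algebra.adjoin k (s : Set K)) :=
      Subalgebra.fg_iff_finiteType _ |>.1 (Subalgebra.fg_adjoin_finset s)
    exact exists_point
  let g := fun s => (hg s).some
  let e : K → Finset K → K := fun x s =>
    if h : x ∈ Algebra.adjoin k (s : Set K) then ((g s ⟨x, h⟩ : k) : K) else 0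
  have he : ∀ x (s : Finset K) (h : x ∈ Algebra.adjoin k (s : Set K)), e x s = ((g s ⟨x, h⟩ : k) : K) :=
    fun x s h => dif_pos h
  have hmem : ∀ x : K, ∀ᶠ s : Finset K in (φ : Filter (Finset K)), x ∈ Algebra.adjoin k (s : Set K) := by
    intro x
    apply hφ
    filter_upwards [eventually_ge_atTop ({x} : Finset K)] with s hs
    exact Algebra.subset_adjoin (hs (Finset.mem_singleton_self x))
  have hk : ∀ x ∈ k, ∀ s, e x s = x := by
    intro x hx s
    have h : x ∈ Algebra.adjoin k (s : Set K) :=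
      Subalgebra.algebraMap_mem _ (⟨x, hx⟩ : k)
    rw [he x s h]
    have : (⟨x, h⟩ : Algebra.adjoin k (s : Set K)) = algebraMap k _ (⟨x, hx⟩ : k) := rfl
    rw [this, AlgHom.commutes]
    rfl
  let ψ : M →+* Germ (φ : Filter (Finset K)) K :=
    { toFun := fun x => (e x : Germ (φ : Filter (Finset K)) K)
      map_one' := Germ.coe_eq.2 (Eventually.of_forall fun s => hk 1 k.one_mem s)
      map_zero' := Germ.coe_eq.2 (Eventually.of_forall fun s => hk 0 k.zero_mem s)
      map_mul' := fun x y => by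
        refine Germ.coe_eq.2 ?_
        filter_upwards [hmem x, hmem y] with s h1 h2
        rw [Subfield.coe_mul, he _ s h1, he _ s h2, he _ s (mul_mem h1 h2)]
        exact congrArg Subtype.val (map_mul (g s) ⟨x, h1⟩ ⟨y, h2⟩)
      map_add' := fun x y => by
        refine Germ.coe_eq.2 ?_
        filter_upwards [hmem x, hmem y] with s h1 h2
        rw [Subfield.coe_add, he _ s h1, he _ s h2, he _ s (add_mem h1 h2)]
        exact congrArg Subtype.val (map_add (g s) ⟨x, h1⟩ ⟨y, h2⟩) }
  refine ⟨φ, ψ, fun x hx => Germ.coe_eq.2 (Eventually.of_forall fun s => hk x hx s), fun x => ?_⟩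
  change (e x : Germ (φ : Filter (Finset K)) K) ∈ germSub φ k
  rw [coe_mem_germSub]
  filter_upwards [hmem x] with s h1
  rw [he _ s h1]
  exact (g s _).2

theorem ext_hom_aux {R K Ω : Type*} [CommRing R] [IsDomain R] [Field K] [Field Ω] [IsAlgClosed Ω]
    (i : R →+* K) (hi : Function.Injective i) (θ : R →+* Ω) (hθ : Function.Injective θ)
    (N : Subfield K) (hN : N ≤ Subfield.closure (Set.range i)) :
    ∃ Φ : algCl N →+* Ω, ∀ (r : R) (hr : i r ∈ algCl N), Φ ⟨i r, hr⟩ = θ r := by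
  let : Algebra R K := i.toAlgebra
  let : Algebra R Ω := θ.toAlgebra
  have : FaithfulSMul R K := (faithfulSMul_iff_algebraMap_injective _ _).2 hi
  have : FaithfulSMul R Ω := (faithfulSMul_iff_algebraMap_injective _ _).2 hθ
  let Q := Subalgebra.algebraicClosure R K
  let QF : Subfield K :=
    { Q with
      neg_mem' := fun hx => Q.neg_mem hx
      inv_mem' := fun x hx => IsAlgebraic.inv hx }
  have hNQ : N ≤ QF := by
    refine hN.trans (Subfield.closure_le.2 ?_)
    rintro _ ⟨r, rfl⟩
    exact isAlgebraic_algebraMap (A := K) r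
  have hQ : ∀ x ∈ algCl N, x ∈ Q := by
    intro x hx
    rw [mem_algCl] at hx
    have h1 : IsAlgebraic QF x := isAlgebraic_of_le hNQ hx
    have h2 : IsAlgebraic Q x := h1
    exact h2.restrictScalars R
  let Φ0 : Q →ₐ[R] Ω := IsAlgClosed.lift
  let inc : algCl N →+* Q := (algCl N).subtype.codRestrict Q fun x => hQ x x.2
  refine ⟨Φ0.toRingHom.comp inc, fun r hr => ?_⟩
  have h1 : inc ⟨i r, hr⟩ = algebraMap R Q r := rfl
  change Φ0 (inc _) = _
  rw [h1, AlgHom.commutes]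
  rfl

open TensorProduct in
theorem tensor_hom.{u, v} {k K : Type u} {Ω : Type v} [Field k] [Field K] [Field Ω] [Algebra k K]
    (L1 M1 : Subalgebra k K) (hd : L1.LinearDisjoint M1)
    (c : K →+* Ω) (ψ : M1 →+* Ω) (hψ : ∀ x : k, ψ (algebraMap k M1 x) = c (algebraMap k K x))
    (hind : ∀ (ι : Type u) (s : Finset ι) (l : ι → K) (m : ι → M1), (∀ i, l i ∈ L1) →
      LinearIndependent k l → ∑ i ∈ s, c (l i) * ψ (m i) = 0 → ∀ i ∈ s, m i = 0) :
    ∃ (R : Type u) (_ : CommRing R) (_ : IsDomain R) (i : R →+* K) (θ : R →+* Ω),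
      Function.Injective i ∧ Function.Injective θ ∧
      (∀ x ∈ L1, ∃ r, i r = x ∧ θ r = c x) ∧
      ∀ x : M1, ∃ r, i r = x ∧ θ r = ψ x := by
  have hinjK : Function.Injective (L1.mulMap M1) :=
    Subalgebra.linearDisjoint_iff_injective.1 hd
  let : Algebra k Ω := (c.comp (algebraMap k K)).toAlgebra
  let cL : L1 →ₐ[k] Ω := { toRingHom := c.comp L1.val.toRingHom, commutes' := fun _ => rfl }
  let ψM : M1 →ₐ[k] Ω := { toRingHom := ψ, commutes' := fun x => hψ x }
  let θ : L1 ⊗[k] M1 →ₐ[k] Ω := Algebra.TensorProduct.lift cL ψM fun _ _ => Commute.all _ _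
  have hinjΩ : Function.Injective θ := by
    rw [injective_iff_map_eq_zero]
    intro t ht
    let b := Module.Free.chooseBasis k L1
    obtain ⟨m, rfl⟩ := TensorProduct.eq_repr_basis_left b t
    have hli : LinearIndependent k (fun i => (b i : K)) :=
      b.linearIndependent.map' L1.val.toLinearMap
        (LinearMap.ker_eq_bot.2 Subtype.val_injective)
    have := hind _ m.support (fun i => (b i : K)) (fun i => m i) (fun i => (b i).2) hli (by
      rw [← ht, Finsupp.sum, map_sum]
      refine Finset.sum_congr rfl fun i _ => ?_
      rw [Algebra.TensorProduct.lift_tmul]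
      rfl)
    rw [Finsupp.sum]
    refine Finset.sum_eq_zero fun i hi => ?_
    have h0 : m i = 0 := this i hi
    rw [h0, TensorProduct.tmul_zero]
  have hdom : IsDomain (L1 ⊗[k] M1) := hinjK.isDomain (L1.mulMap M1).toRingHom
  refine ⟨L1 ⊗[k] M1, inferInstance, hdom, (L1.mulMap M1).toRingHom, θ.toRingHom, hinjK, hinjΩ,
    fun x hx => ⟨(⟨x, hx⟩ : L1) ⊗ₜ[k] (1 : M1), ?_, ?_⟩,
    fun x => ⟨(1 : L1) ⊗ₜ[k] x, ?_, ?_⟩⟩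
  · change L1.mulMap M1 _ = x
    simp
  · change θ _ = _
    rw [Algebra.TensorProduct.lift_tmul, map_one, mul_one]
    rfl
  · change L1.mulMap M1 _ = x
    simp
  · change θ _ = _
    rw [Algebra.TensorProduct.lift_tmul, map_one, one_mul]
    rfl

theorem ext_hom.{u, v} {K : Type u} {Ω : Type v} [Field K] [Field Ω] [IsAlgClosed Ω]
    {k L M : Subfield K}
    (hkL : k ≤ L) (hkM : k ≤ M) (hd : LinearDisjointOver k L M)
    (c : K →+* Ω) (ψ : M →+* Ω) (hψ : ∀ (x : K) (hx : x ∈ k), ψ ⟨x, hkM hx⟩ = c x)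
    (hind : ∀ (ι : Type u) (s : Finset ι) (l : ι → K) (m : ι → M), (∀ i, l i ∈ L) →
      LinearIndependent k l → ∑ i ∈ s, c (l i) * ψ (m i) = 0 → ∀ i ∈ s, m i = 0) :
    ∃ Φ : algCl (L ⊔ M) →+* Ω,
      (∀ (x : K) (hx : x ∈ L), Φ ⟨x, le_algCl _ (le_sup_left (a := L) hx)⟩ = c x) ∧
      ∀ (x : K) (hx : x ∈ M), Φ ⟨x, le_algCl _ (le_sup_right (b := M) hx)⟩ = ψ ⟨x, hx⟩ := by
  rw [LinearDisjointOver, span_subfield hkL, span_subfield hkM] at hd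
  obtain ⟨R, _, _, i, θ, hi, hθ, hL, hM⟩ := tensor_hom (Subfield.extendScalars hkL).toSubalgebra
    (Subfield.extendScalars hkM).toSubalgebra hd c ψ (fun x => hψ x x.2) hind
  obtain ⟨Φ, hΦ⟩ := ext_hom_aux i hi θ hθ (L ⊔ M) (by
    refine sup_le (fun x hx => ?_) fun x hx => ?_
    · obtain ⟨r, hr, -⟩ := hL x hx
      exact Subfield.subset_closure ⟨r, hr⟩
    · obtain ⟨r, hr, -⟩ := hM ⟨x, hx⟩
      exact Subfield.subset_closure ⟨r, hr⟩)
  refine ⟨Φ, fun x hx => ?_, fun x hx => ?_⟩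
  · obtain ⟨r, hr, hr2⟩ := hL x hx
    subst hr
    rw [hΦ, hr2]
  · obtain ⟨r, hr, hr2⟩ := hM ⟨x, hx⟩
    change i r = x at hr
    subst hr
    exact (hΦ _ _).trans hr2

open Filter in
/-- The diagonal embedding of `K` into its ultrapower. -/
def germConst {K : Type*} [Field K] {X : Type*} (φ : Ultrafilter X) :
    K →+* Germ (φ : Filter X) K where
  toFun := fun x => ((fun _ => x : X → K) : Germ (φ : Filter X) K)
  map_one' := rfl
  map_zero' := rfl
  map_mul' := fun _ _ => rfl
  map_add' := fun _ _ => rfl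

open Filter in
theorem germConst_mem {K : Type*} [Field K] {X : Type*} (φ : Ultrafilter X) (x : K)
    (P : Subfield K) : germConst φ x ∈ germSub φ P ↔ x ∈ P := by
  have h : germConst φ x ∈ germSub φ P ↔ ∀ᶠ _ in (φ : Filter X), x ∈ P := coe_mem_germSub
  rw [h]
  simp

open Filter in
theorem germ_sum2 {K : Type*} [Field K] {X : Type*} (φ : Ultrafilter X) {ι : Type*} (s : Finset ι)
    (l : ι → K) (f : ι → X → K) :
    ∑ i ∈ s, germConst φ (l i) * (f i : Germ (φ : Filter X) K) =
      ((fun j => ∑ i ∈ s, l i * f i j : X → K) : Germ (φ : Filter X) K) := by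
  have : (fun j => ∑ i ∈ s, l i * f i j : X → K) = ∑ i ∈ s, (fun _ => l i) * f i := by
    ext j; simp
  rw [this]
  change _ = Germ.coeRingHom (φ : Filter X) (∑ i ∈ s, (fun _ => l i) * f i)
  rw [map_sum]
  rfl

open Filter in
theorem germ_ind {K : Type*} [Field K] {X : Type*} (φ : Ultrafilter X) (k : Subfield K)
    {ι : Type*} (s : Finset ι) (l : ι → K) (m : ι → Germ (φ : Filter X) K)
    (hm : ∀ i, m i ∈ germSub φ k) (hli : LinearIndependent k l)
    (hs : ∑ i ∈ s, germConst φ (l i) * m i = 0) (i : ι) (hi : i ∈ s) : m i = 0 := by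
  have hrep : ∀ x : Germ (φ : Filter X) K, ∃ f : X → K,
      (f : Germ (φ : Filter X) K) = x := fun x => Germ.inductionOn x fun f => ⟨f, rfl⟩
  choose f hf using fun i => hrep (m i)
  have hfk : ∀ i, ∀ᶠ j in (φ : Filter X), f i j ∈ k := fun i => by
    rw [← coe_mem_germSub, hf]
    exact hm _
  have hsum : ∀ᶠ j in (φ : Filter X), ∑ i ∈ s, l i * f i j = 0 := by
    have h0 : ((fun j => ∑ i ∈ s, l i * f i j : X → K) :
        Germ (φ : Filter X) K) = ((0 : X → K) : Germ (φ : Filter X) K) := by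
      rw [← germ_sum2]
      simp only [hf]
      exact hs
    exact Germ.coe_eq.1 h0
  have hall : ∀ᶠ j in (φ : Filter X), ∀ i ∈ s, f i j ∈ k :=
    (Filter.eventually_all_finset _).2 fun i _ => hfk i
  have hz : ∀ᶠ j in (φ : Filter X), f i j = 0 := by
    filter_upwards [hsum, hall] with j h1 h2
    classical
    rw [linearIndependent_iff'] at hli
    have h3 := hli s (fun i => if h : f i j ∈ k then (⟨f i j, h⟩ : k) else 0) (by
      rw [← h1]
      refine Finset.sum_congr rfl fun i hi => ?_
      rw [dif_pos (h2 i hi)]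
      exact mul_comm _ _) i hi
    rw [dif_pos (h2 i hi)] at h3
    exact congrArg Subtype.val h3
  rw [← hf]
  exact Germ.coe_eq.2 hz

theorem exists_pkg.{u} {K : Type u} [Field K] [IsAlgClosed K] {k M : Subfield K}
    (hkM : k ≤ M) [IsAlgClosed k] :
    ∃ (Ω : Type u) (_ : Field Ω) (_ : IsAlgClosed Ω) (c : K →+* Ω)
      (G : Subfield K → Subfield Ω) (ψ : M →+* Ω),
      Monotone G ∧ (∀ P, algCl (G P) ≤ G (algCl P)) ∧ (∀ x P, c x ∈ G P ↔ x ∈ P) ∧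
      (∀ (x : K) (hx : x ∈ k), ψ ⟨x, hkM hx⟩ = c x) ∧ (∀ x, ψ x ∈ G k) ∧
      ∀ (ι : Type u) (s : Finset ι) (l : ι → K) (m : ι → M),
        LinearIndependent k l → ∑ i ∈ s, c (l i) * ψ (m i) = 0 → ∀ i ∈ s, m i = 0 := by
  obtain ⟨φ, ψ, hψ, hψk⟩ := exists_spec hkM
  refine ⟨_, _, isAlgClosed_germ (K := K) φ, germConst φ, germSub φ, ψ,
    fun _ _ h => germSub_mono h, algCl_germSub_le φ, germConst_mem φ, hψ, hψk, ?_⟩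
  intro ι s l m hli hs i hi
  exact (map_eq_zero ψ).1 (germ_ind φ k s l (fun i => ψ (m i)) (fun i => hψk _) hli hs i hi)

theorem alg_transfer {K Ω : Type*} [Field K] [Field Ω] {N E : Subfield K} (hNE : N ≤ E)
    (Φ : E →+* Ω) (Q : Subfield Ω) (hQ : ∀ (y : K) (hy : y ∈ N), Φ ⟨y, hNE hy⟩ ∈ Q)
    (x : K) (hxE : x ∈ E) (hx : IsAlgebraic N x) : Φ ⟨x, hxE⟩ ∈ algCl Q := by
  obtain ⟨p, hp0, hp⟩ := hx
  let f : N →+* Q := (Φ.comp (Subfield.inclusion hNE)).codRestrict Q fun y => hQ y y.2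
  have hf : Q.subtype.comp f = Φ.comp (Subfield.inclusion hNE) := RingHom.ext fun _ => rfl
  rw [mem_algCl]
  refine ⟨p.map f, (Polynomial.map_ne_zero_iff f.injective).2 hp0, ?_⟩
  have h1 : Polynomial.eval₂ (Subfield.inclusion hNE) (⟨x, hxE⟩ : E) p = 0 := by
    apply E.subtype_injective
    rw [Polynomial.hom_eval₂, map_zero]
    exact hp
  have h2 := congrArg Φ h1
  rw [Polynomial.hom_eval₂, map_zero, ← hf] at h2
  rw [Polynomial.aeval_def, Polynomial.eval₂_map]
  exact h2

theorem core_abs {K Ω : Type*} [Field K] [Field Ω] {k L M : Subfield K}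
    {ι : Type*} (P : ι → Subfield K) (hkP : ∀ i, k ≤ P i) (hPL : ∀ i, P i ≤ L)
    (hP : ∀ i, algCl (P i) ≤ P i) (c : K →+* Ω) (G : Subfield K → Subfield Ω) (hG : Monotone G)
    (hGalg : ∀ P, algCl (G P) ≤ G (algCl P)) (hc : ∀ x P, c x ∈ G P ↔ x ∈ P)
    (E : Subfield K) (hLE : L ≤ E) (hME : M ≤ E) (hE : algCl E ≤ E)
    (Φ : E →+* Ω)
    (hΦL : ∀ (x : K) (hx : x ∈ L), Φ ⟨x, hLE hx⟩ = c x)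
    (hΦM : ∀ (x : K) (hx : x ∈ M), Φ ⟨x, hME hx⟩ ∈ G k) :
    L ⊓ ⨆ i, algCl (P i ⊔ M) ≤ ⨆ i, P i := by
  have key : ∀ (Q : Subfield Ω) (N : Subfield K),
      N ≤ ((Q.comap Φ).map E.subtype) ↔ ∀ x ∈ N, ∃ h : x ∈ E, Φ ⟨x, h⟩ ∈ Q := by
    intro Q N
    refine forall₂_congr fun x _ => ?_
    rw [Subfield.mem_map]
    constructor
    · rintro ⟨z, hz, rfl⟩
      exact ⟨z.2, Subfield.mem_comap.1 hz⟩
    · rintro ⟨h, h'⟩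
      exact ⟨⟨x, h⟩, Subfield.mem_comap.2 h', rfl⟩
  have hW : ∀ i, algCl (P i ⊔ M) ≤ ((G (⨆ i, P i)).comap Φ).map E.subtype := by
    intro i
    have hNE : P i ⊔ M ≤ E := sup_le ((hPL i).trans hLE) hME
    have hWi : P i ⊔ M ≤ ((G (P i)).comap Φ).map E.subtype := by
      refine sup_le ((key _ _).2 fun y hy => ?_) ((key _ _).2 fun y hy => ?_)
      · refine ⟨hLE (hPL i hy), ?_⟩
        rw [hΦL y (hPL i hy)]
        exact (hc _ _).2 hy
      · exact ⟨hME hy, hG (hkP i) (hΦM y hy)⟩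
    rw [key] at hWi ⊢
    intro x hx
    have hxE : x ∈ E := hE (algCl_mono hNE hx)
    have h1 := alg_transfer hNE Φ (G (P i)) (fun y hy => (hWi y hy).2) x hxE (mem_algCl.1 hx)
    exact ⟨hxE, hG ((hP i).trans (le_iSup P i)) (hGalg (P i) h1)⟩
  rintro x ⟨hxL, hx⟩
  obtain ⟨h, hz⟩ := (key _ _).1 (iSup_le hW) x hx
  rw [hΦL x hxL] at hz
  exact (hc _ _).1 hz

theorem core {K : Type*} [Field K] [IsAlgClosed K] {k L M : Subfield K}
    (hkL : k ≤ L) (hkM : k ≤ M) [IsAlgClosed k] (hd : LinearDisjointOver k L M)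
    {ι : Type*} (P : ι → Subfield K) (hkP : ∀ i, k ≤ P i) (hPL : ∀ i, P i ≤ L)
    (hP : ∀ i, algCl (P i) ≤ P i) :
    L ⊓ ⨆ i, algCl (P i ⊔ M) ≤ ⨆ i, P i := by
  obtain ⟨Ω, _, _, c, G, ψ, hG, hGalg, hc, hψ, hψk, hind⟩ := exists_pkg hkM
  obtain ⟨Φ, hΦL, hΦM⟩ := ext_hom hkL hkM hd c ψ hψ
    (fun ι s l m _ hli hs i hi => hind ι s l m hli hs i hi)
  exact core_abs P hkP hPL hP c G hG hGalg hc _ (le_sup_left.trans (le_algCl _))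
    (le_sup_right.trans (le_algCl _)) (algCl_idem _).le Φ hΦL fun x hx => by
    rw [hΦM x hx]
    exact hψk _

theorem invCl_eq_self {K : Type*} [Field K] (σ : K ≃+* K) (A : Subfield K)
    (hA : A.map (σ : K →+* K) = A) : invCl σ A = A := by
  refine le_antisymm (sInf_le ⟨le_rfl, fun x hx => ?_, fun x hx => ?_⟩) (le_sInf fun F hF => hF.1)
  · have : (σ : K →+* K) x ∈ A.map (σ : K →+* K) := Subfield.mem_map.2 ⟨x, hx, rfl⟩
    rw [hA] at this
    exact this
  · rw [← hA, Subfield.mem_map] at hx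
    obtain ⟨y, hy, rfl⟩ := hx
    simpa using hy

theorem le_invCl {K : Type*} [Field K] (σ : K ≃+* K) (A : Subfield K) : A ≤ invCl σ A :=
  le_sInf fun _ hF => hF.1

theorem galois_le_algCl {K : Type*} [Field K] {F E : Subfield K} (h : IsFiniteGaloisExt F E) :
    E ≤ algCl F := by
  obtain ⟨hFE, h1, -⟩ := h
  let : Algebra F E := (Subfield.inclusion hFE).toAlgebra
  have : IsScalarTower F E K := IsScalarTower.of_algebraMap_eq fun _ => rfl
  have : FiniteDimensional F E := h1
  intro x hx
  rw [mem_algCl]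
  exact (Algebra.IsAlgebraic.isAlgebraic (R := F) (⟨x, hx⟩ : E)).algebraMap (A := K)

namespace DiffFieldSystem

variable {K : Type*} [Field K] {σ : K ≃+* K}
variable {V : Type*} [Fintype V] [DecidableEq V] {A : Subfield K}

theorem le_gen (𝒮 : DiffFieldSystem σ V A) (v : Finset V) :
    𝒮.S v ≤ algCl (A ⊔ ⨆ i ∈ v, 𝒮.S {i}) := by
  induction v using Finset.strongInduction with
  | H v ih =>
    rcases Nat.lt_or_ge v.card 2 with h | h
    · have h2 : v.card = 0 ∨ v.card = 1 := by omega
      rcases h2 with h2 | h2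
      · rw [Finset.card_eq_zero] at h2
        subst h2
        rw [𝒮.empty_eq]
        exact le_sup_left.trans (le_algCl _)
      · obtain ⟨i, rfl⟩ := Finset.card_eq_one.1 h2
        refine le_trans ?_ (le_algCl _)
        refine le_trans ?_ le_sup_right
        exact le_iSup₂_of_le i (Finset.mem_singleton_self i) le_rfl
    · refine (galois_le_algCl (𝒮.galois v h)).trans ?_
      rw [algCl_le_iff]
      refine iSup₂_le fun w hw => ?_
      rw [Finset.mem_erase, Finset.mem_powerset] at hw
      refine (ih w (Finset.ssubset_iff_subset_ne.2 ⟨hw.2, hw.1⟩)).trans (algCl_mono ?_)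
      refine sup_le_sup_left (iSup₂_le fun i hi => ?_) _
      exact le_iSup₂_of_le i (hw.2 hi) le_rfl

theorem disj (𝒮 : DiffFieldSystem σ V A) (hA : A.map (σ : K →+* K) = A) (u : Finset V) :
    LinearDisjointOver (algCl A) (algCl (𝒮.S u)) (algCl (𝒮.S uᶜ)) := by
  have h := 𝒮.indep u uᶜ disjoint_compl_right
  unfold IndependentOver at h
  rw [invCl_eq_self σ A hA] at h
  refine linDisj_mono h ?_ ?_ <;>
  · rw [algCl_le_iff]
    exact (𝒮.le_gen _).trans (algCl_mono (le_sup_left.trans (le_invCl _ _)))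

theorem algCl_le_split (𝒮 : DiffFieldSystem σ V A) (u v : Finset V) :
    algCl (𝒮.S v) ≤ algCl (algCl (𝒮.S (v ∩ u)) ⊔ algCl (𝒮.S uᶜ)) := by
  rw [algCl_le_iff]
  refine (𝒮.le_gen v).trans (algCl_mono (sup_le ?_ (iSup₂_le fun i hi => ?_)))
  · exact (𝒮.empty_eq.ge.trans (𝒮.mono (Finset.empty_subset _))).trans ((le_algCl _).trans le_sup_left)
  · by_cases hu : i ∈ u
    · refine le_trans (𝒮.mono ?_) ((le_algCl _).trans le_sup_left)
      simp [hi, hu]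
    · refine le_trans (𝒮.mono ?_) ((le_algCl _).trans le_sup_right)
      simp [hu]

theorem inf_le (𝒮 : DiffFieldSystem σ V A) [IsAlgClosed K] (hA : A.map (σ : K →+* K) = A)
    (hreg : 𝒮.Regular) (u : Finset V) (hu : u ≠ ∅) (X : Set (Finset V))
    (hX : ∀ v ∈ X, ¬ u ⊆ v) : 𝒮.S u ⊓ (⨆ v ∈ X, 𝒮.S v) ≤ 𝒮.Sminus u := by
  have : IsAlgClosed (algCl A) := isAlgClosed_algCl A
  have hAS : ∀ v, A ≤ 𝒮.S v := fun v =>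
    𝒮.empty_eq.ge.trans (𝒮.mono (Finset.empty_subset _))
  have h1 := core (algCl_mono (hAS u)) (algCl_mono (hAS uᶜ)) (𝒮.disj hA u)
    (fun w : {w // w ∈ u.powerset.erase u} => algCl (𝒮.S w)) (fun i => algCl_mono (hAS _))
    (fun i => algCl_mono (𝒮.mono (Finset.mem_powerset.1 (Finset.mem_of_mem_erase i.2))))
    (fun i => (algCl_idem _).le)
  have h2 : (⨆ v ∈ X, 𝒮.S v) ≤ ⨆ w : {w // w ∈ u.powerset.erase u},
      algCl (algCl (𝒮.S w) ⊔ algCl (𝒮.S uᶜ)) := by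
    refine iSup₂_le fun v hv => ?_
    have hw : v ∩ u ∈ u.powerset.erase u := by
      rw [Finset.mem_erase, Finset.mem_powerset]
      refine ⟨fun h => hX v hv ?_, Finset.inter_subset_right⟩
      exact Finset.inter_eq_right.1 h
    refine le_trans ?_ (le_iSup _ (⟨v ∩ u, hw⟩ : {w // w ∈ u.powerset.erase u}))
    exact (le_algCl _).trans (𝒮.algCl_le_split u v)
  have h3 : 𝒮.S u ⊓ (⨆ v ∈ X, 𝒮.S v) ≤ ⨆ v ∈ u.powerset.erase u, algCl (𝒮.S v) := by
    refine (inf_le_inf (le_algCl _) h2).trans (h1.trans ?_)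
    exact iSup_le fun w => le_iSup₂_of_le w.1 w.2 le_rfl
  refine (le_inf inf_le_left h3).trans (linDisj_inf (hreg u hu) ?_ ?_)
  · refine iSup₂_le fun v hv => 𝒮.mono (Finset.mem_powerset.1 (Finset.mem_of_mem_erase hv))
  · exact iSup₂_mono fun v hv => le_algCl _

theorem Sminus_le (𝒮 : DiffFieldSystem σ V A) (u : Finset V) : 𝒮.Sminus u ≤ 𝒮.S u :=
  iSup₂_le fun _ hv => 𝒮.mono (Finset.mem_powerset.1 (Finset.mem_of_mem_erase hv))

end DiffFieldSystem

/-- (Degree computation in the Stochastic Independence Theorem.)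
Let `J` be an antichain on `V` of sets of size `≥ 2` with `⋃J = V`, `I` the
simplicial complex generated by `J`, and `𝒮` a regular `I`-system. Then
`[S(V) : S₀(V)] = ∏_{u ∈ J} [S(u) : S(u)⁻]`, where `S₀(V) = ∏_{v ∈ I\J} S(v)`. -/
theorem stochastic_independence_degree_computation
    {K : Type*} [Field K] [IsAlgClosed K] (σ : K ≃+* K)
    {V : Type*} [Fintype V] [DecidableEq V]
    (A : Subfield K) (hAperf : PerfectField A) (hAinv : A.map (σ : K →+* K) = A)
    (J : Finset (Finset V))
    (hJ2 : ∀ u ∈ J, 2 ≤ u.card)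
    (hJanti : ∀ u ∈ J, ∀ v ∈ J, u ⊆ v → u = v)
    (hJcover : ∀ i : V, ∃ u ∈ J, i ∈ u)
    (𝒮 : DiffFieldSystem σ V A)
    (h𝒮 : 𝒮.IsOn {v : Finset V | ∃ u ∈ J, v ⊆ u})
    (hreg : 𝒮.Regular) :
    subfieldDeg (⨆ v ∈ ({v : Finset V | ∃ u ∈ J, v ⊆ u} \ ↑J), 𝒮.S v)
        (𝒮.S Finset.univ) =
      ∏ u ∈ J, subfieldDeg (𝒮.Sminus u) (𝒮.S u) := by
  set X : Set (Finset V) := {v : Finset V | ∃ u ∈ J, v ⊆ u} \ ↑J with hXdef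
  have hne : ∀ u ∈ J, u ≠ ∅ := fun u hu h => by
    have := hJ2 u hu
    rw [h] at this
    simp at this
  have hXJ : ∀ u ∈ J, ∀ v ∈ X, ¬ u ⊆ v := by
    rintro u hu v ⟨⟨w, hw, hvw⟩, hvJ⟩ huv
    have h1 := hJanti u hu w hw (huv.trans hvw)
    subst h1
    exact hvJ ((Finset.Subset.antisymm hvw huv) ▸ hu)
  have hmin : ∀ u ∈ J, 𝒮.Sminus u ≤ ⨆ v ∈ X, 𝒮.S v := by
    intro u hu
    refine iSup₂_le fun v hv => ?_
    rw [Finset.mem_erase, Finset.mem_powerset] at hv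
    refine le_iSup₂_of_le v ⟨⟨u, hu, hv.2⟩, fun hvJ => hv.1 (hJanti v hvJ u hu hv.2)⟩ le_rfl
  have main : ∀ J' : Finset (Finset V), J' ⊆ J →
      (⨆ v ∈ X, 𝒮.S v).relfinrank (⨆ v ∈ X ∪ ↑J', 𝒮.S v) =
        ∏ u ∈ J', (𝒮.Sminus u).relfinrank (𝒮.S u) := by
    intro J'
    induction J' using Finset.induction_on with
    | empty =>
      intro _
      simp
    | insert u J' hu ih =>
      intro hJ'
      have huJ : u ∈ J := hJ' (Finset.mem_insert_self _ _)
      have hsub : J' ⊆ J := (Finset.subset_insert _ _).trans hJ'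
      have hle : (⨆ v ∈ X, 𝒮.S v) ≤ ⨆ v ∈ X ∪ ↑J', 𝒮.S v :=
        biSup_mono fun v hv => Or.inl hv
      have heq : (⨆ v ∈ X ∪ ↑(insert u J'), 𝒮.S v) = 𝒮.S u ⊔ ⨆ v ∈ X ∪ ↑J', 𝒮.S v := by
        rw [Finset.coe_insert, Set.union_insert, iSup_insert]
      have hinf : 𝒮.S u ⊓ (⨆ v ∈ X ∪ ↑J', 𝒮.S v) = 𝒮.Sminus u := by
        refine le_antisymm (𝒮.inf_le hAinv hreg u (hne u huJ) _ ?_)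
          (le_inf (𝒮.Sminus_le u) ((hmin u huJ).trans hle))
        rintro v (hv | hv) huv
        · exact hXJ u huJ v hv huv
        · have := hJanti u huJ v (hsub hv) huv
          subst this
          exact hu hv
      rw [Finset.prod_insert hu, heq, ← ih hsub,
        ← gal_deg (F := 𝒮.Sminus u) (𝒮.galois u (hJ2 u huJ)) ((hmin u huJ).trans hle) hinf, mul_comm]
      exact (Subfield.relfinrank_mul_relfinrank hle le_sup_right).symm
  have htop : 𝒮.S Finset.univ = ⨆ v ∈ X ∪ ↑J, 𝒮.S v := by
    refine le_antisymm ?_ (iSup₂_le fun v _ => 𝒮.mono (Finset.subset_univ v))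
    have hall : ∀ v : Finset V, 𝒮.S v ≤ ⨆ v ∈ X ∪ ↑J, 𝒮.S v := by
      intro v
      induction v using Finset.strongInduction with
      | H v ih =>
        by_cases hv : v ∈ {v : Finset V | ∃ u ∈ J, v ⊆ u}
        · by_cases hvJ : v ∈ J
          · exact le_iSup₂_of_le v (Or.inr hvJ) le_rfl
          · exact le_iSup₂_of_le v (Or.inl ⟨hv, hvJ⟩) le_rfl
        · rw [h𝒮 v hv]
          refine iSup₂_le fun w hw => ih w ?_
          rw [Finset.mem_erase, Finset.mem_powerset] at hw
          exact Finset.ssubset_iff_subset_ne.2 ⟨hw.2, hw.1⟩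
    exact hall _
  rw [subfieldDeg_eq (iSup₂_le fun v _ => 𝒮.mono (Finset.subset_univ v)), htop, main J subset_rfl]
  exact Finset.prod_congr rfl fun u _ => (subfieldDeg_eq (𝒮.Sminus_le u)).symm
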